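/- arXiv:2506.08590 — 2 statements merged into one kernel-verified Lean document; each statement's English description precedes it below -/
import Mathlib

section
/- Let H be a complex Hilbert space, A a bounded self-adjoint operator on H with A ≥ c·Id for some c > 0, ψ ∈ H and α ∈ ℝ such that T_α := A + α|ψ⟩⟨ψ| satisfies T_α ≥ c'·Id for some c' > 0. Then for every t ≥ 0 one has 1 + α⟨ψ, (A + t^{4/3})⁻¹ψ⟩ > 0, the operator-valued integrand below is Bochner integrable on (0, ∞), and T_α^{-1/4} = A^{-1/4} − (2√2·α/(3π)) ∫₀^∞ (1 / (1 + α⟨ψ, (A + t^{4/3})⁻¹ψ⟩)) · |(A + t^{4/3})⁻¹ψ⟩⟨(A + t^{4/3})⁻¹ψ| dt. -/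
open scoped InnerProductSpace
open MeasureTheory
set_option synthInstance.maxHeartbeats 1000000
set_option maxHeartbeats 1000000

/-- The rank-one operator `|ψ⟩⟨ψ| : x ↦ ⟨ψ, x⟩ψ`. -/
noncomputable def rankOne {H : Type*} [NormedAddCommGroup H] [InnerProductSpace ℂ H]
    (ψ : H) : H →L[ℂ] H := (innerSL ℂ ψ).smulRight ψ

open Filter Topology in
lemma quartic_aux {y : ℝ} (hy : 0 < y) :
    IntegrableOn (fun t : ℝ => (y ^ 4 + t ^ ((4:ℝ)/3))⁻¹) (Set.Ioi 0) ∧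
    ∫ t in Set.Ioi (0:ℝ), (y ^ 4 + t ^ ((4:ℝ)/3))⁻¹ = 3 * Real.pi / (2 * √2) * y⁻¹ := by
  have h2 : (√2 : ℝ) ^ 2 = 2 := Real.sq_sqrt (by norm_num)
  have h2p : 0 < (√2 : ℝ) := by positivity
  set r : ℝ := √2 with hr
  have hm : ∀ s : ℝ, 0 < s ^ 2 - r * s + 1 := fun s => by nlinarith [sq_nonneg (s - r / 2)]
  have hp : ∀ s : ℝ, 0 < s ^ 2 + r * s + 1 := fun s => by nlinarith [sq_nonneg (s + r / 2)]
  let F : ℝ → ℝ := fun s => (1 / (4 * r)) * Real.log ((s ^ 2 - r * s + 1) / (s ^ 2 + r * s + 1)) +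
    (1 / (2 * r)) * (Real.arctan (r * s + 1) + Real.arctan (r * s - 1))
  have hF : ∀ s : ℝ, HasDerivAt F (s ^ 2 / (1 + s ^ 4)) s := by
    intro s
    have hs2 : HasDerivAt (fun s : ℝ => s ^ 2) (2 * s) s := by simpa using hasDerivAt_pow 2 s
    have hrs : HasDerivAt (fun s : ℝ => r * s) r s := by
      simpa using (hasDerivAt_id s).const_mul r
    have d1 : HasDerivAt (fun s : ℝ => s ^ 2 - r * s + 1) (2 * s - r) s :=
      (hs2.sub hrs).add_const 1
    have d2 : HasDerivAt (fun s : ℝ => s ^ 2 + r * s + 1) (2 * s + r) s :=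
      (hs2.add hrs).add_const 1
    have d3 := ((d1.div d2 (hp s).ne').log (div_pos (hm s) (hp s)).ne').const_mul (1 / (4 * r))
    have d4 := (((hrs.add_const 1).arctan).add ((hrs.sub_const 1).arctan)).const_mul (1 / (2 * r))
    refine (d3.add d4).congr_deriv ?_
    have e1 : 1 + (r * s + 1) ^ 2 = 2 * (s ^ 2 + r * s + 1) := by linear_combination s ^ 2 * h2
    have e2 : 1 + (r * s - 1) ^ 2 = 2 * (s ^ 2 - r * s + 1) := by linear_combination s ^ 2 * h2
    have e3 : 1 + s ^ 4 = (s ^ 2 + r * s + 1) * (s ^ 2 - r * s + 1) := by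
      linear_combination s ^ 2 * h2
    simp only [Pi.div_apply]
    rw [e1, e2, e3]
    have hq := (hm s).ne'
    have hp' := (hp s).ne'
    generalize hpe : s ^ 2 + r * s + 1 = p at *
    generalize hqe : s ^ 2 - r * s + 1 = q at *
    field_simp
    rw [← hpe, ← hqe]
    ring
  have hFc : Continuous F := continuous_iff_continuousAt.2 fun s => (hF s).continuousAt
  have hF0 : F 0 = 0 := by simp [F, Real.arctan_neg]
  have hFl : Tendsto F atTop (𝓝 (Real.pi / (2 * r))) := by
    have l1 : Tendsto (fun s : ℝ => (s ^ 2 - r * s + 1) / (s ^ 2 + r * s + 1)) atTop (𝓝 1) := by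
      have hi : Tendsto (fun s : ℝ => s⁻¹) atTop (𝓝 0) := tendsto_inv_atTop_zero
      have : Tendsto (fun s : ℝ => (1 - r * s⁻¹ + s⁻¹ ^ 2) / (1 + r * s⁻¹ + s⁻¹ ^ 2)) atTop
          (𝓝 ((1 - r * 0 + 0 ^ 2) / (1 + r * 0 + 0 ^ 2))) :=
        ((tendsto_const_nhds.sub (hi.const_mul r)).add (hi.pow 2)).div
          ((tendsto_const_nhds.add (hi.const_mul r)).add (hi.pow 2)) (by norm_num)
      norm_num at this
      refine this.congr' ?_
      filter_upwards [eventually_gt_atTop 0] with s hs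
      have := (hp s).ne'
      have h3 : 0 < 1 + r * s⁻¹ + s⁻¹ ^ 2 := by positivity
      rw [show (s ^ 2 - r * s + 1) = s ^ 2 * (1 - r * s⁻¹ + s⁻¹ ^ 2) by field_simp,
        show (s ^ 2 + r * s + 1) = s ^ 2 * (1 + r * s⁻¹ + s⁻¹ ^ 2) by field_simp,
        mul_div_mul_left _ _ (by positivity)]
      simp
    have l2 := (l1.log one_ne_zero).const_mul (1 / (4 * r))
    have hrs : Tendsto (fun s : ℝ => r * s) atTop atTop := tendsto_id.const_mul_atTop h2p
    have la : Tendsto Real.arctan atTop (𝓝 (Real.pi / 2)) :=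
      tendsto_nhds_of_tendsto_nhdsWithin Real.tendsto_arctan_atTop
    have l3 := la.comp (tendsto_atTop_add_const_right _ 1 hrs)
    have l4 := la.comp (tendsto_atTop_add_const_right _ (-1) hrs)
    have := l2.add ((l3.add l4).const_mul (1 / (2 * r)))
    have e : (1 / (4 * r) * Real.log 1 + 1 / (2 * r) * (Real.pi / 2 + Real.pi / 2)) =
        Real.pi / (2 * r) := by
      rw [Real.log_one]
      field_simp
      ring
    rw [e] at this
    exact this
  let G : ℝ → ℝ := fun t => 3 / y * F (t ^ ((1:ℝ)/3) / y)
  have hGd : ∀ t ∈ Set.Ioi (0:ℝ), HasDerivAt G ((y ^ 4 + t ^ ((4:ℝ)/3))⁻¹) t := by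
    intro t ht
    have ht : 0 < t := ht
    have h1 : HasDerivAt (fun t : ℝ => t ^ ((1:ℝ)/3) / y) _ t :=
      (Real.hasDerivAt_rpow_const (p := (1:ℝ)/3) (Or.inl ht.ne')).div_const y
    have h3 := ((hF _).comp t h1).const_mul (3 / y)
    refine h3.congr_deriv ?_
    obtain ⟨u, hu, rfl⟩ : ∃ u : ℝ, 0 < u ∧ u ^ 3 = t :=
      ⟨t ^ ((1:ℝ)/3), by positivity, by
        rw [← Real.rpow_natCast, ← Real.rpow_mul ht.le]; norm_num⟩
    have e1 : (u ^ 3) ^ ((1:ℝ)/3) = u := by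
      rw [← Real.rpow_natCast, ← Real.rpow_mul hu.le]; norm_num
    have e2 : (u ^ 3) ^ ((4:ℝ)/3) = u ^ 4 := by
      rw [← Real.rpow_natCast, ← Real.rpow_mul hu.le, ← Real.rpow_natCast]; norm_num
    have e3 : (u ^ 3) ^ ((1:ℝ)/3 - 1) = (u ^ 2)⁻¹ := by
      rw [← Real.rpow_natCast, ← Real.rpow_mul hu.le, ← Real.rpow_natCast, ← Real.rpow_neg hu.le]
      norm_num
    rw [e1, e2, e3]
    have : 0 < y ^ 4 + u ^ 4 := by positivity
    field_simp
  have hGc : ContinuousWithinAt G (Set.Ici 0) 0 := by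
    have : Continuous fun t : ℝ => t ^ ((1:ℝ)/3) := Real.continuous_rpow_const (by norm_num)
    have : Continuous G := by fun_prop
    exact this.continuousWithinAt
  have hGl : Tendsto G atTop (𝓝 (3 / y * (Real.pi / (2 * r)))) :=
    (hFl.comp ((tendsto_rpow_atTop (by norm_num : (0:ℝ) < 1/3)).atTop_div_const hy)).const_mul _
  have hpos : ∀ t ∈ Set.Ioi (0:ℝ), 0 ≤ (y ^ 4 + t ^ ((4:ℝ)/3))⁻¹ := by
    intro t ht
    have ht : 0 < t := ht
    positivity
  refine ⟨integrableOn_Ioi_deriv_of_nonneg hGc hGd hpos hGl, ?_⟩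
  rw [integral_Ioi_of_hasDerivAt_of_nonneg hGc hGd hpos hGl]
  simp [G, hF0]
  field_simp

lemma scalar_aux {x : ℝ} (hx : 0 < x) :
    IntegrableOn (fun t : ℝ => (x + t ^ ((4:ℝ)/3))⁻¹) (Set.Ioi 0) ∧
    ∫ t in Set.Ioi (0:ℝ), (x + t ^ ((4:ℝ)/3))⁻¹ =
      3 * Real.pi / (2 * √2) * x ^ (-(1/4) : ℝ) := by
  have h := quartic_aux (y := x ^ ((1:ℝ)/4)) (by positivity)
  have e : (x ^ ((1:ℝ)/4)) ^ 4 = x := by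
    rw [← Real.rpow_natCast, ← Real.rpow_mul hx.le]; norm_num
  rw [e] at h
  rwa [Real.rpow_neg hx.le]

section op
variable {H : Type*} [NormedAddCommGroup H] [InnerProductSpace ℂ H] [CompleteSpace H]

lemma spec_aux {B : H →L[ℂ] H} {c : ℝ} (hc : 0 < c) (hB : c • (1 : H →L[ℂ] H) ≤ B) :
    IsSelfAdjoint B ∧ IsStrictlyPositive B ∧ ∀ x ∈ spectrum ℝ B, c ≤ x := by
  have h1 : (0 : H →L[ℂ] H) ≤ c • 1 := smul_nonneg hc.le zero_le_one
  have h0 : 0 ≤ B := h1.trans hB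
  have hs : ∀ x ∈ spectrum ℝ B, c ≤ x := by
    rw [← Algebra.algebraMap_eq_smul_one] at hB
    exact (algebraMap_le_iff_le_spectrum h0.isSelfAdjoint).1 hB
  refine ⟨h0.isSelfAdjoint, ?_, hs⟩
  refine IsUnit.isStrictlyPositive ?_ h0
  exact (spectrum.zero_notMem_iff ℝ).1 fun h => by linarith [hs 0 h]

lemma unit_aux {B : H →L[ℂ] H} {c : ℝ} (hc : 0 < c) (hB : c • (1 : H →L[ℂ] H) ≤ B)
    {l : ℝ} (hl : 0 ≤ l) : IsUnit (B + l • 1) ∧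
      Ring.inverse (B + l • 1) = cfc (fun x : ℝ => (x + l)⁻¹) B ∧
      ‖Ring.inverse (B + l • 1)‖ ≤ (c + l)⁻¹ := by
  obtain ⟨hsa, hsp, hs⟩ := spec_aux hc hB
  have hB' : c • (1 : H →L[ℂ] H) ≤ B + l • 1 :=
    hB.trans (le_add_of_nonneg_right (smul_nonneg hl zero_le_one))
  have e : Ring.inverse (B + l • 1) = cfc (fun x : ℝ => (x + l)⁻¹) B := by
    rw [cfc_inv (fun x : ℝ => x + l) B (fun x hx => by linarith [hs x hx]),
      cfc_add_const l (fun x : ℝ => x) B, cfc_id' ℝ B, Algebra.algebraMap_eq_smul_one]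
  refine ⟨(spec_aux hc hB').2.1.isUnit, e, ?_⟩
  rw [e]
  refine norm_cfc_le (by positivity) fun x hx => ?_
  have := hs x hx
  rw [Real.norm_of_nonneg (by have : 0 ≤ x + l := by linarith
                              positivity)]
  gcongr

lemma cont_aux {B : H →L[ℂ] H} {c : ℝ} (hc : 0 < c) (hB : c • (1 : H →L[ℂ] H) ≤ B) :
    ContinuousOn (fun t : ℝ => Ring.inverse (B + t ^ ((4:ℝ)/3) • 1)) (Set.Ioi 0) := by
  intro t ht
  have ht : 0 < t := ht
  obtain ⟨u, hu⟩ := (unit_aux hc hB (l := t ^ ((4:ℝ)/3)) (by positivity)).1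
  have h1 := NormedRing.inverse_continuousAt u
  rw [hu] at h1
  have h2 : ContinuousAt (fun t : ℝ => B + t ^ ((4:ℝ)/3) • (1 : H →L[ℂ] H)) t := by
    have : Continuous fun t : ℝ => t ^ ((4:ℝ)/3) := Real.continuous_rpow_const (by norm_num)
    exact (by fun_prop : Continuous _).continuousAt
  exact (ContinuousAt.comp (f := fun t : ℝ => B + t ^ ((4:ℝ)/3) • (1 : H →L[ℂ] H))
    h1 h2).continuousWithinAt

lemma int_aux {B : H →L[ℂ] H} {c : ℝ} (hc : 0 < c) (hB : c • (1 : H →L[ℂ] H) ≤ B) :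
    IntegrableOn (fun t : ℝ => Ring.inverse (B + t ^ ((4:ℝ)/3) • 1)) (Set.Ioi 0) := by
  refine Integrable.mono' (scalar_aux hc).1
    ((cont_aux hc hB).aestronglyMeasurable measurableSet_Ioi) ?_
  refine ae_restrict_of_forall_mem measurableSet_Ioi fun t ht => ?_
  have ht : 0 < t := ht
  exact (unit_aux hc hB (by positivity)).2.2

lemma formula_aux {B : H →L[ℂ] H} {c : ℝ} (hc : 0 < c) (hB : c • (1 : H →L[ℂ] H) ≤ B) :
    CFC.sqrt (CFC.sqrt (Ring.inverse B)) = (2 * √2 / (3 * Real.pi)) •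
      ∫ t in Set.Ioi (0:ℝ), Ring.inverse (B + t ^ ((4:ℝ)/3) • 1) := by
  obtain ⟨hsa, hsp, hs⟩ := spec_aux hc hB
  have e1 : CFC.sqrt (CFC.sqrt (Ring.inverse B)) = cfc (fun x : ℝ => x ^ (-(1/4) : ℝ)) B := by
    rw [CFC.sqrt_eq_rpow, CFC.sqrt_eq_rpow, CFC.inverse_eq_rpow_neg_one hsp,
      CFC.rpow_rpow B _ _ (by norm_num) hsp, CFC.rpow_rpow B _ _ (by norm_num) hsp,
      CFC.rpow_eq_cfc_real hsp.nonneg]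
    norm_num
  have e2 : ∫ t in Set.Ioi (0:ℝ), Ring.inverse (B + t ^ ((4:ℝ)/3) • 1) =
      ∫ t in Set.Ioi (0:ℝ), cfc (fun x : ℝ => (x + t ^ ((4:ℝ)/3))⁻¹) B := by
    refine setIntegral_congr_fun measurableSet_Ioi fun t ht => ?_
    have ht : 0 < t := ht
    exact (unit_aux hc hB (by positivity)).2.1
  have e3 := cfc_setIntegral (μ := volume) (measurableSet_Ioi (a := (0:ℝ)))
    (fun t x : ℝ => (x + t ^ ((4:ℝ)/3))⁻¹) (fun t => (c + t ^ ((4:ℝ)/3))⁻¹) B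
    (by
      have : Continuous fun t : ℝ => t ^ ((4:ℝ)/3) := Real.continuous_rpow_const (by norm_num)
      refine ContinuousOn.inv₀ (by fun_prop) ?_
      rintro ⟨t, x⟩ ⟨ht, hx⟩
      have ht : 0 < t := ht
      have := hs x hx
      have : 0 < t ^ ((4:ℝ)/3) := by positivity
      simp only
      linarith)
    (by
      refine ae_restrict_of_forall_mem measurableSet_Ioi fun t ht x hx => ?_
      have ht : 0 < t := ht
      have := hs x hx
      have : 0 < x := by linarith
      rw [Real.norm_of_nonneg (by positivity)]
      gcongr)
    (scalar_aux hc).1.2 hsa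
  have hcont : ContinuousOn (fun x : ℝ => ∫ t in Set.Ioi (0:ℝ), (x + t ^ ((4:ℝ)/3))⁻¹)
      (spectrum ℝ B) := by
    have : ContinuousOn (fun x : ℝ => 3 * Real.pi / (2 * √2) * x ^ (-(1/4) : ℝ)) (spectrum ℝ B) :=
      continuousOn_const.mul (continuousOn_id.rpow_const fun x hx => Or.inl
        (by have := hs x hx; simp only [id]; linarith))
    exact this.congr fun x hx => (scalar_aux (hc.trans_le (hs x hx))).2
  rw [e1, e2, ← e3, ← cfc_smul (2 * √2 / (3 * Real.pi)) _ B hcont]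
  refine cfc_congr fun x hx => ?_
  have hx : 0 < x := hc.trans_le (hs x hx)
  simp only [smul_eq_mul]
  rw [(scalar_aux hx).2]
  have := Real.pi_pos
  have : 0 < √2 := by positivity
  field_simp

lemma inner_ge_aux {B : H →L[ℂ] H} {c : ℝ} (hB : c • (1 : H →L[ℂ] H) ≤ B) (x : H) :
    (⟪x, B x⟫_ℂ).im = 0 ∧ c * ‖x‖ ^ 2 ≤ (⟪x, B x⟫_ℂ).re := by
  have h : (B - c • (1 : H →L[ℂ] H)).IsPositive := (ContinuousLinearMap.le_def _ _).1 hB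
  have h1 := h.inner_nonneg_right x
  have e : ⟪x, (B - c • (1 : H →L[ℂ] H)) x⟫_ℂ = ⟪x, B x⟫_ℂ - ((c * ‖x‖ ^ 2 : ℝ) : ℂ) := by
    simp only [ContinuousLinearMap.sub_apply, ContinuousLinearMap.smul_apply,
      ContinuousLinearMap.one_apply, inner_sub_right]
    rw [← Complex.coe_smul, inner_smul_right, inner_self_eq_norm_sq_to_K]
    push_cast
    rfl
  rw [e, Complex.le_def] at h1
  simp only [Complex.zero_re, Complex.zero_im, Complex.sub_re, Complex.sub_im,
    Complex.ofReal_re, Complex.ofReal_im] at h1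
  exact ⟨by linarith [h1.2], by linarith [h1.1]⟩

lemma rankOne_apply_aux (ψ x : H) : rankOne ψ x = ⟪ψ, x⟫_ℂ • ψ := by
  simp [rankOne]

/-- All the algebra at a fixed spectral parameter. -/
lemma key_aux {A T : H →L[ℂ] H} {c c' : ℝ} (hc : 0 < c) (hc' : 0 < c')
    (hAc : c • (1 : H →L[ℂ] H) ≤ A) (hTc : c' • (1 : H →L[ℂ] H) ≤ T) {ψ : H} {α : ℝ}
    (hT : T = A + α • rankOne ψ) {l : ℝ} (hl : 0 ≤ l) :
    ((1 + (α : ℂ) * ⟪ψ, (Ring.inverse (A + l • 1)) ψ⟫_ℂ).im = 0 ∧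
      0 < (1 + (α : ℂ) * ⟪ψ, (Ring.inverse (A + l • 1)) ψ⟫_ℂ).re) ∧
    ((1 : ℂ) / (1 + (α : ℂ) * ⟪ψ, (Ring.inverse (A + l • 1)) ψ⟫_ℂ)) •
          rankOne ((Ring.inverse (A + l • 1)) ψ) =
      Ring.inverse (T + l • 1) * (rankOne ψ * Ring.inverse (A + l • 1)) ∧
    Ring.inverse (T + l • 1) = Ring.inverse (A + l • 1) -
      α • (Ring.inverse (T + l • 1) * (rankOne ψ * Ring.inverse (A + l • 1))) := by
  have huA := (unit_aux hc hAc hl).1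
  have huT := (unit_aux hc' hTc hl).1
  have hAl : c • (1 : H →L[ℂ] H) ≤ A + l • 1 :=
    hAc.trans (le_add_of_nonneg_right (smul_nonneg hl zero_le_one))
  have hTl : c' • (1 : H →L[ℂ] H) ≤ T + l • 1 :=
    hTc.trans (le_add_of_nonneg_right (smul_nonneg hl zero_le_one))
  have hTA : T + l • 1 = (A + l • 1) + α • rankOne ψ := by rw [hT]; abel
  generalize A + l • 1 = A' at *
  generalize T + l • 1 = T' at *
  set R := Ring.inverse A' with hR
  set S := Ring.inverse T' with hS
  have hAR : A' * R = 1 := Ring.mul_inverse_cancel _ huA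
  have hST : S * T' = 1 := Ring.inverse_mul_cancel _ huT
  have hsaA : IsSelfAdjoint A' := (spec_aux hc hAl).1
  have hARx : ∀ x, A' (R x) = x := fun x => by
    have := congrArg (fun L : H →L[ℂ] H => L x) hAR
    simpa using this
  have hSTx : ∀ x, S (T' x) = x := fun x => by
    have := congrArg (fun L : H →L[ℂ] H => L x) hST
    simpa using this
  have hsym : ∀ x y, ⟪A' x, y⟫_ℂ = ⟪x, A' y⟫_ℂ := fun x y =>
    (ContinuousLinearMap.isSelfAdjoint_iff_isSymmetric.1 hsaA) x y
  have hRsym : ∀ x, ⟪ψ, R x⟫_ℂ = ⟪R ψ, x⟫_ℂ := fun x => by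
    conv_lhs => rw [← hARx ψ]
    rw [hsym, hARx]
  have hq1 : ⟪ψ, R ψ⟫_ℂ = ⟪R ψ, A' (R ψ)⟫_ℂ := by rw [hARx, hRsym]
  obtain ⟨him, hre⟩ := inner_ge_aux hAl (R ψ)
  obtain ⟨him', hre'⟩ := inner_ge_aux hTl (R ψ)
  rw [← hq1] at him hre
  have hTR : T' (R ψ) = (1 + (α : ℂ) * ⟪ψ, R ψ⟫_ℂ) • ψ := by
    rw [hTA, ContinuousLinearMap.add_apply, hARx, ContinuousLinearMap.smul_apply,
      rankOne_apply_aux, add_smul, one_smul, mul_smul, Complex.coe_smul]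
  rw [hTR, inner_smul_right, ← hRsym] at hre'
  have hq : ⟪ψ, R ψ⟫_ℂ = (((⟪ψ, R ψ⟫_ℂ).re : ℝ) : ℂ) := by
    apply Complex.ext <;> simp [him]
  set q := (⟪ψ, R ψ⟫_ℂ).re
  have hk : (1 + (α : ℂ) * ⟪ψ, R ψ⟫_ℂ) = ((1 + α * q : ℝ) : ℂ) := by
    rw [hq]; push_cast; rfl
  have hpos : 0 < 1 + α * q := by
    rw [hk, hq, ← Complex.ofReal_mul, Complex.ofReal_re] at hre'
    by_cases h0 : R ψ = 0
    · have : q = 0 := by simp [q, h0]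
      rw [this]; norm_num
    · have hn : 0 < ‖R ψ‖ ^ 2 := by positivity
      have h1 : 0 < q := lt_of_lt_of_le (by positivity) hre
      have h2 : 0 < (1 + α * q) * q := lt_of_lt_of_le (by positivity) hre'
      exact pos_of_mul_pos_left h2 h1.le
  have hkne : ((1 + α * q : ℝ) : ℂ) ≠ 0 := Complex.ofReal_ne_zero.2 hpos.ne'
  refine ⟨?_, ?_, ?_⟩
  · rw [hk]
    exact ⟨Complex.ofReal_im _, by rw [Complex.ofReal_re]; exact hpos⟩
  · have hSψ : S ψ = ((1 : ℂ) / ((1 + α * q : ℝ) : ℂ)) • R ψ := by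
      have h1 := hSTx (R ψ)
      rw [hTR, hk, map_smul] at h1
      rw [← h1, smul_smul, one_div, inv_mul_cancel₀ hkne, one_smul]
    ext x
    rw [hk]
    simp only [ContinuousLinearMap.smul_apply, ContinuousLinearMap.mul_apply, rankOne_apply_aux,
      map_smul, hSψ, hRsym]
    rw [smul_comm]
  · have : S * T' * R = S * (A' * R) + α • (S * (rankOne ψ * R)) := by
      rw [hTA]
      simp [mul_add, add_mul, mul_assoc]
    rw [hST, hAR, one_mul, mul_one] at this
    exact eq_sub_of_add_eq this.symm

end op

/-- Integral formula for the inverse fourth root of a rank-one perturbation: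
if `A ≥ c·Id` (`c > 0`) and `T = A + α|ψ⟩⟨ψ| ≥ c'·Id` (`c' > 0`), then for every
`t ≥ 0` the scalar `1 + α⟨ψ, (A+t^{4/3})⁻¹ψ⟩` is a positive real number, the
operator-valued integrand is Bochner integrable on `(0,∞)`, and
`T^{-1/4} = A^{-1/4} − (2√2 α/(3π)) ∫₀^∞ (1/(1 + α⟨ψ,(A+t^{4/3})⁻¹ψ⟩))
|(A+t^{4/3})⁻¹ψ⟩⟨(A+t^{4/3})⁻¹ψ| dt`, where the positive fourth root of the inverse is
the square root of the square root of the inverse. -/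
theorem inv_fourth_root_rank_one_perturbation
    {H : Type*} [NormedAddCommGroup H] [InnerProductSpace ℂ H] [CompleteSpace H]
    (A : H →L[ℂ] H) (hA : IsSelfAdjoint A) (c : ℝ) (hc : 0 < c)
    (hAc : c • (1 : H →L[ℂ] H) ≤ A) (ψ : H) (α : ℝ)
    (T : H →L[ℂ] H) (hT : T = A + α • rankOne ψ)
    (c' : ℝ) (hc' : 0 < c') (hTc : c' • (1 : H →L[ℂ] H) ≤ T) :
    (∀ t : ℝ, 0 ≤ t →
        (1 + (α : ℂ) * ⟪ψ, (Ring.inverse (A + t ^ ((4:ℝ)/3) • 1)) ψ⟫_ℂ).im = 0 ∧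
        0 < (1 + (α : ℂ) * ⟪ψ, (Ring.inverse (A + t ^ ((4:ℝ)/3) • 1)) ψ⟫_ℂ).re) ∧
    IntegrableOn (fun t : ℝ =>
        ((1 : ℂ) / (1 + (α : ℂ) * ⟪ψ, (Ring.inverse (A + t ^ ((4:ℝ)/3) • 1)) ψ⟫_ℂ)) •
          rankOne ((Ring.inverse (A + t ^ ((4:ℝ)/3) • 1)) ψ)) (Set.Ioi 0) ∧
    CFC.sqrt (CFC.sqrt (Ring.inverse T)) =
      CFC.sqrt (CFC.sqrt (Ring.inverse A)) - (2 * Real.sqrt 2 * α / (3 * Real.pi)) •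
        ∫ t in Set.Ioi (0:ℝ),
          ((1 : ℂ) / (1 + (α : ℂ) * ⟪ψ, (Ring.inverse (A + t ^ ((4:ℝ)/3) • 1)) ψ⟫_ℂ)) •
            rankOne ((Ring.inverse (A + t ^ ((4:ℝ)/3) • 1)) ψ) := by
  have key : ∀ t : ℝ, 0 ≤ t → _ := fun t ht =>
    key_aux hc hc' hAc hTc hT (l := t ^ ((4:ℝ)/3)) (by positivity)
  have hInt : IntegrableOn (fun t : ℝ =>
        ((1 : ℂ) / (1 + (α : ℂ) * ⟪ψ, (Ring.inverse (A + t ^ ((4:ℝ)/3) • 1)) ψ⟫_ℂ)) •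
          rankOne ((Ring.inverse (A + t ^ ((4:ℝ)/3) • 1)) ψ)) (Set.Ioi 0) := by
    have h1 : IntegrableOn (fun t : ℝ => Ring.inverse (T + t ^ ((4:ℝ)/3) • 1) *
        (rankOne ψ * Ring.inverse (A + t ^ ((4:ℝ)/3) • 1))) (Set.Ioi 0) := by
      refine Integrable.bdd_mul (c := c'⁻¹) ((int_aux hc hAc).const_mul (rankOne ψ))
        ((cont_aux hc' hTc).aestronglyMeasurable measurableSet_Ioi) ?_
      refine ae_restrict_of_forall_mem measurableSet_Ioi fun t ht => ?_
      have ht : 0 < t := ht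
      refine (unit_aux hc' hTc (l := t ^ ((4:ℝ)/3)) (by positivity)).2.2.trans ?_
      have : 0 < t ^ ((4:ℝ)/3) := by positivity
      gcongr
      linarith
    exact h1.congr_fun (fun t ht => (key t (le_of_lt ht)).2.1.symm) measurableSet_Ioi
  refine ⟨fun t ht => (key t ht).1, hInt, ?_⟩
  rw [formula_aux hc' hTc, formula_aux hc hAc]
  have e : ∫ t in Set.Ioi (0:ℝ), Ring.inverse (T + t ^ ((4:ℝ)/3) • 1) =
      ∫ t in Set.Ioi (0:ℝ), (Ring.inverse (A + t ^ ((4:ℝ)/3) • 1) -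
        α • (((1 : ℂ) / (1 + (α : ℂ) * ⟪ψ, (Ring.inverse (A + t ^ ((4:ℝ)/3) • 1)) ψ⟫_ℂ)) •
          rankOne ((Ring.inverse (A + t ^ ((4:ℝ)/3) • 1)) ψ))) := by
    refine setIntegral_congr_fun measurableSet_Ioi fun t ht => ?_
    beta_reduce
    have h := key t (le_of_lt ht)
    rw [h.2.1]
    exact h.2.2
  rw [e, integral_sub (int_aux hc hAc) (Integrable.fun_smul α hInt), integral_smul, smul_sub, smul_smul]
  congr 2
  ring
end

section
/- Let H be a complex Hilbert space, A a bounded self-adjoint operator on H with A ≥ Id, ψ ∈ H and α ≥ 0, and set T_α = A + α|ψ⟩⟨ψ|. Then for every Hilbert (orthonormal) basis (e_i) of H, the family of nonnegative real numbers ⟨e_i, (T_α^{1/2} − A^{1/2}) e_i⟩ is summable and ∑_i ⟨e_i, (T_α^{1/2} − A^{1/2}) e_i⟩ = (2α/π) ∫₀^∞ t² ‖(A + t²)⁻¹ψ‖² / (1 + α⟨ψ, (A + t²)⁻¹ψ⟩) dt, and this quantity is finite. -/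
open scoped InnerProductSpace
open MeasureTheory
set_option synthInstance.maxHeartbeats 1000000
set_option maxHeartbeats 1000000

lemma aux_int (x : ℝ) (hx : 0 < x) :
    ∫ t in Set.Ioi (0:ℝ), (1 + -(t ^ 2 * (x + t ^ 2)⁻¹)) = Real.pi / 2 * √x := by
  have h := integral_comp_mul_left_Ioi (fun y : ℝ => (1 + y ^ 2)⁻¹) 0
    (b := (√x)⁻¹) (by positivity)
  simp only [mul_zero, integral_Ioi_inv_one_add_sq, Real.arctan_zero, sub_zero, inv_inv,
    smul_eq_mul] at h
  rw [mul_comm, ← h]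
  refine integral_congr_ae (Filter.Eventually.of_forall fun t => ?_)
  have h1 : 0 < x + t ^ 2 := by positivity
  have h2 : √x ^ 2 = x := Real.sq_sqrt hx.le
  simp only [mul_pow, inv_pow, h2]
  field_simp
  ring

section aux
variable {H : Type*} [NormedAddCommGroup H] [InnerProductSpace ℂ H] [CompleteSpace H]

lemma aux_isUnit {A : H →L[ℂ] H} (hA1 : (1 : H →L[ℂ] H) ≤ A) (t : ℝ) :
    IsUnit (A + t ^ 2 • (1 : H →L[ℂ] H)) := by
  refine CStarAlgebra.isUnit_of_le 1 (hA1.trans ?_) 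
  have : (0 : H →L[ℂ] H) ≤ t ^ 2 • (1 : H →L[ℂ] H) := smul_nonneg (by positivity) zero_le_one
  simpa using this

lemma aux_cont {A : H →L[ℂ] H} (hA1 : (1 : H →L[ℂ] H) ≤ A) :
    Continuous (fun t : ℝ => Ring.inverse (A + t ^ 2 • (1 : H →L[ℂ] H))) := by
  rw [continuous_iff_continuousAt]
  intro t
  obtain ⟨u, hu⟩ := aux_isUnit hA1 t
  have h := NormedRing.inverse_continuousAt u
  rw [hu] at h
  exact ContinuousAt.comp (f := fun t : ℝ => A + t ^ 2 • (1 : H →L[ℂ] H)) h (by fun_prop)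

lemma aux_spec {A : H →L[ℂ] H} (hA : IsSelfAdjoint A) (hA1 : (1 : H →L[ℂ] H) ≤ A) :
    ∀ x ∈ spectrum ℝ A, 1 ≤ x := by
  have := (algebraMap_le_iff_le_spectrum (R := ℝ) (r := 1) (a := A) hA).1 (by simpa using hA1)
  exact this

lemma aux_cfc {A : H →L[ℂ] H} (hA : IsSelfAdjoint A) (hA1 : (1 : H →L[ℂ] H) ≤ A) (t : ℝ) :
    cfc (fun x : ℝ => 1 + -(t ^ 2 * (x + t ^ 2)⁻¹)) A =
      1 + -(t ^ 2 • Ring.inverse (A + t ^ 2 • (1 : H →L[ℂ] H))) := by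
  have hs : ∀ x ∈ spectrum ℝ A, x + t ^ 2 ≠ 0 := fun x hx => by
    have := aux_spec hA hA1 x hx
    positivity
  have hc : ContinuousOn (fun x : ℝ => (x + t ^ 2)⁻¹) (spectrum ℝ A) :=
    ContinuousOn.inv₀ (by fun_prop) hs
  rw [cfc_const_add (1 : ℝ) (fun x : ℝ => -(t ^ 2 * (x + t ^ 2)⁻¹)) A (by fun_prop) hA,
    cfc_neg, cfc_const_mul _ _ _ hc, cfc_inv _ _ hs (by fun_prop) hA,
    cfc_add_const _ _ _ (by fun_prop) hA, cfc_id' ℝ A hA, map_one, Algebra.algebraMap_eq_smul_one]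

lemma aux_sqrt {A : H →L[ℂ] H} (hA : IsSelfAdjoint A) (hA1 : (1 : H →L[ℂ] H) ≤ A) :
    IntegrableOn (fun t : ℝ => 1 + -(t ^ 2 • Ring.inverse (A + t ^ 2 • (1 : H →L[ℂ] H))))
      (Set.Ioi 0) ∧
    (Real.pi / 2) • CFC.sqrt A =
      ∫ t in Set.Ioi (0:ℝ), (1 + -(t ^ 2 • Ring.inverse (A + t ^ 2 • (1 : H →L[ℂ] H)))) := by
  have hc : ContinuousOn (Function.uncurry fun (t x : ℝ) => 1 + -(t ^ 2 * (x + t ^ 2)⁻¹))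
      (Set.Ioi 0 ×ˢ spectrum ℝ A) := by
    have : ContinuousOn (fun p : ℝ × ℝ => (p.2 + p.1 ^ 2)⁻¹) (Set.Ioi 0 ×ˢ spectrum ℝ A) :=
      ContinuousOn.inv₀ (by fun_prop) fun p hp => by
        have := aux_spec hA hA1 p.2 hp.2
        positivity
    simp only [Function.uncurry_def]
    fun_prop
  have hb : ∀ᵐ t : ℝ ∂(volume.restrict (Set.Ioi 0)), ∀ z ∈ spectrum ℝ A,
      ‖1 + -(t ^ 2 * (z + t ^ 2)⁻¹)‖ ≤ (‖A‖ * ‖(1 : H →L[ℂ] H)‖) * (1 + t ^ 2)⁻¹ := by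
    refine Filter.Eventually.of_forall fun t z hz => ?_
    have h1 := aux_spec hA hA1 z hz
    have h2 : z ≤ ‖A‖ * ‖(1 : H →L[ℂ] H)‖ := (le_abs_self z).trans (spectrum.norm_le_norm_mul_of_mem hz)
    have h3 : 1 + -(t ^ 2 * (z + t ^ 2)⁻¹) = z * (z + t ^ 2)⁻¹ := by
      have : 0 < z + t ^ 2 := by positivity
      field_simp
      ring
    rw [h3, Real.norm_of_nonneg (by positivity)]
    gcongr
  have hi : HasFiniteIntegral (fun t : ℝ => (‖A‖ * ‖(1 : H →L[ℂ] H)‖) * (1 + t ^ 2)⁻¹)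
      (volume.restrict (Set.Ioi 0)) :=
    (integrable_inv_one_add_sq.const_mul _).integrableOn.2
  have e1 := cfc_setIntegral measurableSet_Ioi _ _ A hc hb hi hA
  have e2 := integrableOn_cfc measurableSet_Ioi _ _ A hc hb hi hA
  simp only [aux_cfc hA hA1] at e1 e2
  refine ⟨e2, ?_⟩
  rw [← e1, CFC.sqrt_eq_real_sqrt A (zero_le_one.trans hA1), cfcₙ_eq_cfc,
    ← cfc_const_mul _ _ _ (by fun_prop)]
  exact cfc_congr fun x hx => (aux_int x (zero_lt_one.trans_le (aux_spec hA hA1 x hx))).symm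

lemma aux_sqrt_inner {A : H →L[ℂ] H} (hA : IsSelfAdjoint A) (hA1 : (1 : H →L[ℂ] H) ≤ A) (v : H) :
    IntegrableOn (fun t : ℝ => (⟪v, (1 + -(t ^ 2 • Ring.inverse (A + t ^ 2 • (1 : H →L[ℂ] H)))) v⟫_ℂ).re)
      (Set.Ioi 0) ∧
    Real.pi / 2 * (⟪v, CFC.sqrt A v⟫_ℂ).re =
      ∫ t in Set.Ioi (0:ℝ), (⟪v, (1 + -(t ^ 2 • Ring.inverse (A + t ^ 2 • (1 : H →L[ℂ] H)))) v⟫_ℂ).re := by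
  obtain ⟨h1, h2⟩ := aux_sqrt hA hA1
  let L : (H →L[ℂ] H) →L[ℝ] ℝ := Complex.reCLM.comp
    (((innerSL ℂ v).comp (ContinuousLinearMap.apply ℂ H v)).restrictScalars ℝ)
  have hL : ∀ B, L B = (⟪v, B v⟫_ℂ).re := fun B => rfl
  refine ⟨L.integrable_comp h1, ?_⟩
  have := L.integral_comp_comm h1
  rw [← h2, map_smul] at this
  exact this.symm

lemma aux_re_smul (c : ℝ) (v w : H) : (⟪v, c • w⟫_ℂ).re = c * (⟪v, w⟫_ℂ).re := by
  rw [← Complex.coe_smul, inner_smul_right, Complex.re_ofReal_mul]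

lemma aux_lower {A : H →L[ℂ] H} (hA1 : (1 : H →L[ℂ] H) ≤ A) (t : ℝ) (x : H) :
    (1 + t ^ 2) * ‖x‖ ^ 2 ≤ (⟪x, (A + t ^ 2 • (1 : H →L[ℂ] H)) x⟫_ℂ).re := by
  have h := ((ContinuousLinearMap.le_def _ _).1 hA1).re_inner_nonneg_right x
  have h3 : (⟪x, x⟫_ℂ).re = ‖x‖ ^ 2 := by
    have := inner_self_eq_norm_sq (𝕜 := ℂ) x
    simpa using this
  have h5 : (⟪x, (A + t ^ 2 • (1 : H →L[ℂ] H)) x⟫_ℂ).re =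
      (⟪x, A x⟫_ℂ).re + t ^ 2 * ‖x‖ ^ 2 := by
    rw [add_apply, inner_add_right, Complex.add_re,
      smul_apply, aux_re_smul, one_apply_eq_self, h3]
  simp [inner_sub_right, -inner_self_eq_norm_sq_to_K, h3] at h
  rw [h5]
  linarith

lemma aux_right {A : H →L[ℂ] H} (hA1 : (1 : H →L[ℂ] H) ≤ A) (t : ℝ) (x : H) :
    (A + t ^ 2 • (1 : H →L[ℂ] H)) (Ring.inverse (A + t ^ 2 • (1 : H →L[ℂ] H)) x) = x := by
  have := Ring.mul_inverse_cancel _ (aux_isUnit hA1 t)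
  exact congrArg (fun B : H →L[ℂ] H => B x) this

lemma aux_left {A : H →L[ℂ] H} (hA1 : (1 : H →L[ℂ] H) ≤ A) (t : ℝ) (x : H) :
    Ring.inverse (A + t ^ 2 • (1 : H →L[ℂ] H)) ((A + t ^ 2 • (1 : H →L[ℂ] H)) x) = x := by
  have := Ring.inverse_mul_cancel _ (aux_isUnit hA1 t)
  exact congrArg (fun B : H →L[ℂ] H => B x) this

lemma aux_symm {A : H →L[ℂ] H} (hA : IsSelfAdjoint A) (hA1 : (1 : H →L[ℂ] H) ≤ A) (t : ℝ)
    (x y : H) :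
    ⟪x, Ring.inverse (A + t ^ 2 • (1 : H →L[ℂ] H)) y⟫_ℂ =
      ⟪Ring.inverse (A + t ^ 2 • (1 : H →L[ℂ] H)) x, y⟫_ℂ := by
  have hB : IsSelfAdjoint (A + t ^ 2 • (1 : H →L[ℂ] H)) :=
    hA.add (IsSelfAdjoint.smul (IsSelfAdjoint.all _) (IsSelfAdjoint.one _))
  have h := (ContinuousLinearMap.isSelfAdjoint_iff_isSymmetric.1 hB)
    (Ring.inverse (A + t ^ 2 • (1 : H →L[ℂ] H)) x) (Ring.inverse (A + t ^ 2 • (1 : H →L[ℂ] H)) y)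
  simp only [ContinuousLinearMap.coe_coe, aux_right hA1] at h
  exact h

lemma aux_k_nonneg {A : H →L[ℂ] H} (hA : IsSelfAdjoint A) (hA1 : (1 : H →L[ℂ] H) ≤ A) (t : ℝ)
    (x : H) : 0 ≤ (⟪x, Ring.inverse (A + t ^ 2 • (1 : H →L[ℂ] H)) x⟫_ℂ).re := by
  have h := aux_lower hA1 t (Ring.inverse (A + t ^ 2 • (1 : H →L[ℂ] H)) x)
  rw [aux_right hA1] at h
  rw [aux_symm hA hA1]
  exact le_trans (by positivity) h

lemma aux_k_im {A : H →L[ℂ] H} (hA : IsSelfAdjoint A) (hA1 : (1 : H →L[ℂ] H) ≤ A) (t : ℝ)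
    (x : H) : ⟪x, Ring.inverse (A + t ^ 2 • (1 : H →L[ℂ] H)) x⟫_ℂ =
      ((⟪x, Ring.inverse (A + t ^ 2 • (1 : H →L[ℂ] H)) x⟫_ℂ).re : ℂ) := by
  symm
  rw [← Complex.conj_eq_iff_re, inner_conj_symm, ← aux_symm hA hA1]

lemma aux_norm {A : H →L[ℂ] H} (hA1 : (1 : H →L[ℂ] H) ≤ A) (t : ℝ)
    (x : H) : (1 + t ^ 2) * ‖Ring.inverse (A + t ^ 2 • (1 : H →L[ℂ] H)) x‖ ≤ ‖x‖ := by
  set y := Ring.inverse (A + t ^ 2 • (1 : H →L[ℂ] H)) x with hy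
  have h := aux_lower hA1 t y
  rw [hy, aux_right hA1, ← hy] at h
  have h2 : (⟪y, x⟫_ℂ).re ≤ ‖y‖ * ‖x‖ := re_inner_le_norm (𝕜 := ℂ) y x
  rcases (norm_nonneg y).eq_or_lt with h0 | h0
  · rw [← h0]; simp
  · refine le_of_mul_le_mul_left ?_ h0
    nlinarith

lemma aux_rankOne_nonneg (ψ : H) : (0 : H →L[ℂ] H) ≤ rankOne ψ := by
  rw [ContinuousLinearMap.nonneg_iff_isPositive, ContinuousLinearMap.isPositive_iff_complex]
  intro x
  have : ⟪rankOne ψ x, x⟫_ℂ = ((‖⟪ψ, x⟫_ℂ‖ ^ 2 : ℝ) : ℂ) := by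
    have h1 : rankOne ψ x = ⟪ψ, x⟫_ℂ • ψ := rfl
    rw [h1, inner_smul_left, Complex.conj_mul', Complex.ofReal_pow]
  rw [this]
  refine ⟨by simp only [RCLike.re_eq_complex_re, Complex.ofReal_re], ?_⟩
  simp only [RCLike.re_eq_complex_re, Complex.ofReal_re]
  positivity

lemma aux_diff {A : H →L[ℂ] H} (hA : IsSelfAdjoint A) (hA1 : (1 : H →L[ℂ] H) ≤ A) (t : ℝ)
    (ψ : H) (α : ℝ) (hα : 0 ≤ α) (T : H →L[ℂ] H) (hT : T = A + α • rankOne ψ)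
    (hT1 : (1 : H →L[ℂ] H) ≤ T) (v : H) :
    (⟪v, Ring.inverse (A + t ^ 2 • (1 : H →L[ℂ] H)) v⟫_ℂ).re -
      (⟪v, Ring.inverse (T + t ^ 2 • (1 : H →L[ℂ] H)) v⟫_ℂ).re =
    α * (‖⟪v, Ring.inverse (A + t ^ 2 • (1 : H →L[ℂ] H)) ψ⟫_ℂ‖ ^ 2 /
      (1 + α * (⟪ψ, Ring.inverse (A + t ^ 2 • (1 : H →L[ℂ] H)) ψ⟫_ℂ).re)) := by
  have hk0 := aux_k_nonneg hA hA1 t ψ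
  have hk := aux_k_im hA hA1 t ψ
  have hs := aux_symm hA hA1 t ψ v
  set k := (⟪ψ, Ring.inverse (A + t ^ 2 • (1 : H →L[ℂ] H)) ψ⟫_ℂ).re
  set y := Ring.inverse (T + t ^ 2 • (1 : H →L[ℂ] H)) v with hy
  have e1 : (A + t ^ 2 • (1 : H →L[ℂ] H)) y + ((α : ℂ) * ⟪ψ, y⟫_ℂ) • ψ = v := by
    have := aux_right hT1 t v
    rw [← hy] at this
    conv_rhs => rw [← this]
    subst hT
    simp [rankOne, mul_smul]
    abel
  have e2 := congrArg (fun w => (Ring.inverse (A + t ^ 2 • (1 : H →L[ℂ] H))) w) e1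
  simp only [map_add, map_smul, aux_left hA1] at e2
  rw [← e2, inner_add_right, inner_smul_right, hk] at hs
  rw [← e2, inner_add_right, inner_smul_right, Complex.add_re, add_sub_cancel_left]
  have hpos : (0:ℝ) < 1 + α * k := by positivity
  have hne : (1 + α * k : ℂ) ≠ 0 := by exact_mod_cast hpos.ne'
  set z := Ring.inverse (A + t ^ 2 • (1 : H →L[ℂ] H)) ψ
  have e3 : ⟪ψ, y⟫_ℂ = ⟪z, v⟫_ℂ / (1 + α * k : ℂ) := by
    rw [eq_div_iff hne, ← hs]
    ring
  have e4 : ⟪z, v⟫_ℂ * ⟪v, z⟫_ℂ = ((‖⟪v, z⟫_ℂ‖ ^ 2 : ℝ) : ℂ) := by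
    rw [← inner_conj_symm z v, Complex.conj_mul']; simp
  have e5 : (α : ℂ) * ⟪ψ, y⟫_ℂ * ⟪v, z⟫_ℂ = ((α * (‖⟪v, z⟫_ℂ‖ ^ 2 / (1 + α * k)) : ℝ) : ℂ) := by
    rw [e3]; push_cast; push_cast at e4; rw [← e4]; ring
  rw [e5, Complex.ofReal_re]

lemma aux_parseval {ι : Type*} (e : HilbertBasis ι ℂ H) (x : H) :
    HasSum (fun i => ‖⟪e i, x⟫_ℂ‖ ^ 2) (‖x‖ ^ 2) := by
  have h := Complex.hasSum_re (e.hasSum_inner_mul_inner x x)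
  have h3 : (⟪x, x⟫_ℂ).re = ‖x‖ ^ 2 := by
    have := inner_self_eq_norm_sq (𝕜 := ℂ) x
    simpa using this
  rw [h3] at h
  refine h.congr_fun fun i => ?_
  rw [← inner_conj_symm x (e i), Complex.conj_mul', ← Complex.ofReal_pow, Complex.ofReal_re]

end aux

/-- Trace formula for the square root of a rank-one perturbation: if `A ≥ Id`,
`α ≥ 0` and `T = A + α|ψ⟩⟨ψ|`, then for every Hilbert basis `(e i)` the family of
nonnegative reals `⟨e i, (T^{1/2} − A^{1/2}) e i⟩` is summable, the real integrand
is integrable on `(0,∞)` (so the right-hand side is finite), and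
`∑ᵢ ⟨e i, (T^{1/2} − A^{1/2}) e i⟩ = (2α/π) ∫₀^∞ t²‖(A+t²)⁻¹ψ‖²/(1 + α⟨ψ,(A+t²)⁻¹ψ⟩) dt`. -/
theorem trace_sqrt_rank_one_perturbation
    {H : Type*} [NormedAddCommGroup H] [InnerProductSpace ℂ H] [CompleteSpace H]
    {ι : Type*}
    (A : H →L[ℂ] H) (hA : IsSelfAdjoint A) (hA1 : (1 : H →L[ℂ] H) ≤ A)
    (ψ : H) (α : ℝ) (hα : 0 ≤ α)
    (T : H →L[ℂ] H) (hT : T = A + α • rankOne ψ)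
    (e : HilbertBasis ι ℂ H) :
    Summable (fun i => (⟪e i, (CFC.sqrt T - CFC.sqrt A) (e i)⟫_ℂ).re) ∧
    IntegrableOn (fun t : ℝ =>
        t ^ 2 * ‖(Ring.inverse (A + t ^ 2 • 1)) ψ‖ ^ 2 /
          (1 + α * (⟪ψ, (Ring.inverse (A + t ^ 2 • 1)) ψ⟫_ℂ).re)) (Set.Ioi 0) ∧
    ∑' i, (⟪e i, (CFC.sqrt T - CFC.sqrt A) (e i)⟫_ℂ).re =
      (2 * α / Real.pi) * ∫ t in Set.Ioi (0:ℝ),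
        t ^ 2 * ‖(Ring.inverse (A + t ^ 2 • 1)) ψ‖ ^ 2 /
          (1 + α * (⟪ψ, (Ring.inverse (A + t ^ 2 • 1)) ψ⟫_ℂ).re) := by
  have hT1 : (1 : H →L[ℂ] H) ≤ T := by
    rw [hT]
    exact hA1.trans (le_add_of_nonneg_right (smul_nonneg hα (aux_rankOne_nonneg ψ)))
  have hTs : IsSelfAdjoint T := .of_nonneg (zero_le_one.trans hT1)
  set R : ℝ → (H →L[ℂ] H) := fun t => Ring.inverse (A + t ^ 2 • 1) with hR
  have hRc : Continuous R := aux_cont hA1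
  have hRψ : Continuous fun t => R t ψ := by fun_prop
  set D : ℝ → ℝ := fun t => 1 + α * (⟪ψ, R t ψ⟫_ℂ).re with hD
  have hD1 : ∀ t, 1 ≤ D t := fun t => by
    have := mul_nonneg hα (aux_k_nonneg hA hA1 t ψ)
    simp only [hD, hR]; linarith
  have hDc : Continuous D := by
    have : Continuous fun t => ⟪ψ, R t ψ⟫_ℂ := continuous_const.inner hRψ
    have := Complex.continuous_re.comp this
    exact continuous_const.add (continuous_const.mul this)
  have hD0 : ∀ t, D t ≠ 0 := fun t => (zero_lt_one.trans_le (hD1 t)).ne'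
  set F : ℝ → ℝ := fun t => t ^ 2 * ‖R t ψ‖ ^ 2 / D t with hF
  set f : ι → ℝ → ℝ := fun i t => t ^ 2 * ‖⟪e i, R t ψ⟫_ℂ‖ ^ 2 / D t with hf
  have hFc : Continuous F := ((continuous_id.pow 2).mul (hRψ.norm.pow 2)).div hDc hD0
  have hfc : ∀ i, Continuous (f i) := fun i =>
    ((continuous_id.pow 2).mul ((continuous_const.inner hRψ).norm.pow 2)).div hDc hD0
  have hf0 : ∀ i t, 0 ≤ f i t := fun i t => by
    have := hD1 t
    simp only [hf]; positivity
  have hFint : IntegrableOn F (Set.Ioi 0) := by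
    refine Integrable.mono' (g := fun t => ‖ψ‖ ^ 2 * (1 + t ^ 2)⁻¹)
      (integrable_inv_one_add_sq.const_mul _).integrableOn
      hFc.aestronglyMeasurable (Filter.Eventually.of_forall fun t => ?_)
    have h1 := hD1 t
    have h2 : (1 + t ^ 2) * ‖R t ψ‖ ≤ ‖ψ‖ := aux_norm hA1 t ψ
    rw [Real.norm_of_nonneg (by simp only [hF]; positivity)]
    calc F t ≤ t ^ 2 * ‖R t ψ‖ ^ 2 := div_le_self (by positivity) h1
      _ ≤ ((1 + t ^ 2) * ‖R t ψ‖) ^ 2 * (1 + t ^ 2)⁻¹ := by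
        rw [← div_eq_mul_inv, le_div_iff₀ (by positivity)]
        nlinarith [sq_nonneg ‖R t ψ‖, mul_nonneg (sq_nonneg ‖R t ψ‖) (sq_nonneg t)]
      _ ≤ ‖ψ‖ ^ 2 * (1 + t ^ 2)⁻¹ := by gcongr
  have hsum : ∀ t, HasSum (fun i => f i t) (F t) := fun t =>
    ((aux_parseval e (R t ψ)).mul_left (t ^ 2)).div_const (D t)
  have hfint : ∀ i, IntegrableOn (f i) (Set.Ioi 0) := fun i => by
    refine Integrable.mono' hFint (hfc i).aestronglyMeasurable
      (Filter.Eventually.of_forall fun t => ?_)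
    rw [Real.norm_of_nonneg (hf0 i t)]
    exact le_hasSum (hsum t) i fun j _ => hf0 j t
  have hIsum : Summable fun i => ∫ t in Set.Ioi (0:ℝ), f i t := by
    refine summable_of_sum_le (c := ∫ t in Set.Ioi (0:ℝ), F t)
      (fun i => integral_nonneg (hf0 i)) fun u => ?_
    rw [← integral_finsetSum u fun i _ => hfint i]
    refine integral_mono (integrable_finsetSum u fun i _ => hfint i) hFint fun t => ?_
    exact sum_le_hasSum u (fun j _ => hf0 j t) (hsum t)
  have hmain : HasSum (fun i => ∫ t in Set.Ioi (0:ℝ), f i t) (∫ t in Set.Ioi (0:ℝ), F t) := by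
    set S : Set ι := ⋃ q : ℚ, Function.support fun i => ‖⟪e i, R q ψ⟫_ℂ‖ ^ 2 with hS
    have hSc : S.Countable := Set.countable_iUnion fun q =>
      (aux_parseval e (R q ψ)).summable.countable_support
    have hz : ∀ i, i ∉ S → f i = 0 := fun i hi => by
      have h1 : (fun t => ⟪e i, R t ψ⟫_ℂ) = fun _ => 0 := by
        refine Continuous.ext_on (s := Set.range ((↑) : ℚ → ℝ)) Rat.denseRange_cast
          (continuous_const.inner hRψ) continuous_const ?_
        rintro _ ⟨q, rfl⟩
        by_contra hne
        refine hi (Set.mem_iUnion.2 ⟨q, ?_⟩)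
        simpa using hne
      funext t
      have := congrFun h1 t
      simp [hf, this]
    have : Countable S := hSc.to_subtype
    have key := hasSum_integral_of_summable_integral_norm (ι := S)
      (μ := volume.restrict (Set.Ioi (0:ℝ))) (F := fun i => f i) (fun i => hfint i) (by
        simp only [Real.norm_of_nonneg (hf0 _ _)]
        exact hIsum.subtype S)
    rw [← hasSum_subtype_iff_of_support_subset (s := S)]
    · have hEq : ∫ t in Set.Ioi (0:ℝ), F t = ∫ t in Set.Ioi (0:ℝ), ∑' i : S, f i t := ?_
      · rw [hEq]; exact key
      refine integral_congr_ae (Filter.Eventually.of_forall fun t => ?_)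
      refine (HasSum.tsum_eq ?_).symm
      have := hsum t
      rw [← hasSum_subtype_iff_of_support_subset (s := S)] at this
      · exact this
      · intro i hi
        by_contra hn
        exact hi (by simp [hz i hn])
    · intro i hi
      by_contra hn
      exact hi (by simp [hz i hn])
  have hterm : ∀ i, (⟪e i, (CFC.sqrt T - CFC.sqrt A) (e i)⟫_ℂ).re =
      (2 * α / Real.pi) * ∫ t in Set.Ioi (0:ℝ), f i t := fun i => by
    obtain ⟨a1, a2⟩ := aux_sqrt_inner hA hA1 (e i)
    obtain ⟨b1, b2⟩ := aux_sqrt_inner hTs hT1 (e i)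
    have h : Real.pi / 2 * (⟪e i, (CFC.sqrt T - CFC.sqrt A) (e i)⟫_ℂ).re =
        α * ∫ t in Set.Ioi (0:ℝ), f i t := by
      rw [sub_apply, inner_sub_right, Complex.sub_re, mul_sub, a2, b2,
        ← integral_sub b1 a1, ← integral_const_mul]
      refine integral_congr_ae (Filter.Eventually.of_forall fun t => ?_)
      have hd := aux_diff hA hA1 t ψ α hα T hT hT1 (e i)
      simp only [add_apply, neg_apply,
        smul_apply, inner_add_right, inner_neg_right, Complex.add_re,
        Complex.neg_re, aux_re_smul, one_apply_eq_self]
      simp only [hf, hD, hR]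
      rw [mul_div_assoc]
      linear_combination t ^ 2 * hd
    have hpi := Real.pi_pos
    field_simp
    linear_combination 2 * h
  have hfin := hmain.mul_left (2 * α / Real.pi)
  simp only [← hterm] at hfin
  exact ⟨hfin.summable, hFint, hfin.tsum_eq⟩
end
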